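/- If a distortion pair (d1,d2) ∈ ℝ₊² is achievable with bandwidth expansion κ, then there exists a pmf p_W on 𝒲 such that R_{X|Y}(d1) ≤ κ·I(W;U) and R_{Y|X}(d2) ≤ κ·I(W;V). -/

import Mathlib

open scoped BigOperators Classical

noncomputable section

namespace TWR

/-- Base-2 Shannon entropy of a finitely supported distribution (with the
convention `0 * log 0 = 0`, automatic since `Real.logb 2 0 = 0`). -/
def H2 {α : Type} [Fintype α] (p : α → ℝ) : ℝ :=
  -∑ a, p a * Real.logb 2 (p a)

/-- `p` is a probability mass function. -/
def IsPmf {α : Type} [Fintype α] (p : α → ℝ) : Prop :=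
  (∀ a, 0 ≤ p a) ∧ ∑ a, p a = 1

/-- `W` is a conditional pmf. -/
def IsCondPmf {α β : Type} [Fintype β] (W : α → β → ℝ) : Prop :=
  ∀ a, IsPmf (W a)

/-- Mutual information `I(A;B)` (base 2) of a joint pmf on `α × β`. -/
def MI {α β : Type} [Fintype α] [Fintype β] (p : α × β → ℝ) : ℝ :=
  H2 (fun a => ∑ b, p (a, b)) + H2 (fun b => ∑ a, p (a, b)) - H2 p

/-- Conditional entropy `H(A|B)` of a joint pmf on `α × β`. -/
def condH {α β : Type} [Fintype α] [Fintype β] (p : α × β → ℝ) : ℝ :=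
  H2 p - H2 (fun b => ∑ a, p (a, b))

/-- Conditional mutual information `I(A;C|B)` of a joint pmf on `α × β × γ`,
conditioning on the middle coordinate (`I(A;C|B) = H(A,B)+H(B,C)-H(A,B,C)-H(B)`). -/
def condMI {α β γ : Type} [Fintype α] [Fintype β] [Fintype γ] (p : α × β × γ → ℝ) : ℝ :=
  H2 (fun ab : α × β => ∑ c, p (ab.1, ab.2, c)) +
    H2 (fun bc : β × γ => ∑ a, p (a, bc.1, bc.2)) -
    H2 p - H2 (fun b : β => ∑ a, ∑ c, p (a, b, c))

/-- Markov chain `A − B − C` for a joint pmf on `α × β × γ`. -/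
def Markov {α β γ : Type} [Fintype α] [Fintype β] [Fintype γ] (p : α × β × γ → ℝ) : Prop :=
  ∀ a b c, p (a, b, c) * (∑ a', ∑ c', p (a', b, c')) =
    (∑ c', p (a, b, c')) * (∑ a', p (a', b, c))

variable {𝒳 𝒴 Xh Yh 𝒲 𝒰 𝒱 : Type}
variable [Fintype 𝒳] [Fintype 𝒴] [Fintype Xh] [Fintype Yh]
variable [Fintype 𝒲] [Fintype 𝒰] [Fintype 𝒱]

/-- The i.i.d. block source. -/
def iid (q : 𝒳 × 𝒴 → ℝ) (n : ℕ) : (Fin n → 𝒳) × (Fin n → 𝒴) → ℝ :=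
  fun xy => ∏ i, q (xy.1 i, xy.2 i)

/-- Average distortion at receiver 1 of the RD code `(f, g1, ·)`. -/
def Delta1 (q : 𝒳 × 𝒴 → ℝ) (δ1 : 𝒳 → Xh → ℝ) {n m : ℕ}
    (f : (Fin n → 𝒳) × (Fin n → 𝒴) → Fin m)
    (g1 : Fin m × (Fin n → 𝒴) → Fin n → Xh) : ℝ :=
  ∑ xy : (Fin n → 𝒳) × (Fin n → 𝒴),
    iid q n xy * ((n : ℝ)⁻¹ * ∑ i, δ1 (xy.1 i) (g1 (f xy, xy.2) i))

/-- Average distortion at receiver 2 of the RD code `(f, ·, g2)`. -/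
def Delta2 (q : 𝒳 × 𝒴 → ℝ) (δ2 : 𝒴 → Yh → ℝ) {n m : ℕ}
    (f : (Fin n → 𝒳) × (Fin n → 𝒴) → Fin m)
    (g2 : Fin m × (Fin n → 𝒳) → Fin n → Yh) : ℝ :=
  ∑ xy : (Fin n → 𝒳) × (Fin n → 𝒴),
    iid q n xy * ((n : ℝ)⁻¹ * ∑ i, δ2 (xy.2 i) (g2 (f xy, xy.1) i))

/-- `r` is a `(d1,d2)`-achievable rate (source coding). -/
def RDAchievable (q : 𝒳 × 𝒴 → ℝ) (δ1 : 𝒳 → Xh → ℝ) (δ2 : 𝒴 → Yh → ℝ)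
    (d1 d2 r : ℝ) : Prop :=
  ∀ ε > (0 : ℝ), ∃ (n m : ℕ) (f : (Fin n → 𝒳) × (Fin n → 𝒴) → Fin m)
    (g1 : Fin m × (Fin n → 𝒴) → Fin n → Xh)
    (g2 : Fin m × (Fin n → 𝒳) → Fin n → Yh),
    0 < n ∧ Real.logb 2 m / n ≤ r + ε ∧
    Delta1 q δ1 f g1 ≤ d1 + ε ∧ Delta2 q δ2 f g2 ≤ d2 + ε

/-- The rate-distortion function `R(d1,d2)`. -/
def RD (q : 𝒳 × 𝒴 → ℝ) (δ1 : 𝒳 → Xh → ℝ) (δ2 : 𝒴 → Yh → ℝ) (d1 d2 : ℝ) : ℝ :=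
  sInf {r : ℝ | 0 ≤ r ∧ RDAchievable q δ1 δ2 d1 d2 r}

/-- `r` is `(d1,d2)`-achievable with common reconstructions. -/
def CRAchievable (q : 𝒳 × 𝒴 → ℝ) (δ1 : 𝒳 → Xh → ℝ) (δ2 : 𝒴 → Yh → ℝ)
    (d1 d2 r : ℝ) : Prop :=
  ∀ ε > (0 : ℝ), ∃ (n m : ℕ) (f : (Fin n → 𝒳) × (Fin n → 𝒴) → Fin m)
    (g1 : Fin m × (Fin n → 𝒴) → Fin n → Xh)
    (g2 : Fin m × (Fin n → 𝒳) → Fin n → Yh)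
    (φ1 : Fin m × (Fin n → 𝒴) → Fin n → Yh)
    (φ2 : Fin m × (Fin n → 𝒳) → Fin n → Xh),
    0 < n ∧ Real.logb 2 m / n ≤ r + ε ∧
    Delta1 q δ1 f g1 ≤ d1 + ε ∧ Delta2 q δ2 f g2 ≤ d2 + ε ∧
    (∑ xy : (Fin n → 𝒳) × (Fin n → 𝒴),
      if φ2 (f xy, xy.1) = g1 (f xy, xy.2) then 0 else iid q n xy) ≤ ε ∧
    (∑ xy : (Fin n → 𝒳) × (Fin n → 𝒴),
      if φ1 (f xy, xy.2) = g2 (f xy, xy.1) then 0 else iid q n xy) ≤ ε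

/-- The common-reconstruction rate-distortion function `R_CR(d1,d2)`. -/
def CRRD (q : 𝒳 × 𝒴 → ℝ) (δ1 : 𝒳 → Xh → ℝ) (δ2 : 𝒴 → Yh → ℝ) (d1 d2 : ℝ) : ℝ :=
  sInf {r : ℝ | 0 ≤ r ∧ CRAchievable q δ1 δ2 d1 d2 r}

/-- The conditional rate-distortion function `R_{X|Y}(d1)`. -/
def condRD (q : 𝒳 × 𝒴 → ℝ) (δ1 : 𝒳 → Xh → ℝ) (d1 : ℝ) : ℝ :=
  sInf {r : ℝ | ∃ W : 𝒳 × 𝒴 → Xh → ℝ, IsCondPmf W ∧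
    (∑ x, ∑ y, ∑ xh, q (x, y) * W (x, y) xh * δ1 x xh) ≤ d1 ∧
    r = condMI (fun t : 𝒳 × 𝒴 × Xh => q (t.1, t.2.1) * W (t.1, t.2.1) t.2.2)}

/-- Swap the two components of a joint source. -/
def swap (q : 𝒳 × 𝒴 → ℝ) : 𝒴 × 𝒳 → ℝ := fun t => q (t.2, t.1)

/-- The marginal rate-distortion function `R_X(d)`. -/
def margRD (qX : 𝒳 → ℝ) (δ1 : 𝒳 → Xh → ℝ) (d1 : ℝ) : ℝ :=
  sInf {r : ℝ | ∃ W : 𝒳 → Xh → ℝ, IsCondPmf W ∧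
    (∑ x, ∑ xh, qX x * W x xh * δ1 x xh) ≤ d1 ∧
    r = MI (fun t : 𝒳 × Xh => qX t.1 * W t.1 t.2)}

def margX (q : 𝒳 × 𝒴 → ℝ) : 𝒳 → ℝ := fun x => ∑ y, q (x, y)
def margY (q : 𝒳 × 𝒴 → ℝ) : 𝒴 → ℝ := fun y => ∑ x, q (x, y)

/-- The joint rate-distortion function `R_{XY}(d1,d2)`. -/
def jointRD (q : 𝒳 × 𝒴 → ℝ) (δ1 : 𝒳 → Xh → ℝ) (δ2 : 𝒴 → Yh → ℝ) (d1 d2 : ℝ) : ℝ :=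
  sInf {r : ℝ | ∃ W : 𝒳 × 𝒴 → Xh × Yh → ℝ, IsCondPmf W ∧
    (∑ xy : 𝒳 × 𝒴, ∑ z : Xh × Yh, q xy * W xy z * δ1 xy.1 z.1) ≤ d1 ∧
    (∑ xy : 𝒳 × 𝒴, ∑ z : Xh × Yh, q xy * W xy z * δ2 xy.2 z.2) ≤ d2 ∧
    r = MI (fun t : (𝒳 × 𝒴) × (Xh × Yh) => q t.1 * W t.1 t.2)}

/-- The Wyner–Ziv rate-distortion function `R^{WZ}_{X|Y}(d1)`
(with auxiliary alphabet of cardinality `|𝒳| + 1`). -/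
def wzRD (q : 𝒳 × 𝒴 → ℝ) (δ1 : 𝒳 → Xh → ℝ) (d1 : ℝ) : ℝ :=
  sInf {r : ℝ | ∃ p : Fin (Fintype.card 𝒳 + 1) × 𝒳 × 𝒴 → ℝ, IsPmf p ∧
    (∀ x y, (∑ a, p (a, x, y)) = q (x, y)) ∧ Markov p ∧
    (∃ π1 : Fin (Fintype.card 𝒳 + 1) × 𝒴 → Xh,
      (∑ a, ∑ x, ∑ y, p (a, x, y) * δ1 x (π1 (a, y))) ≤ d1) ∧
    r = condMI (fun t : 𝒳 × 𝒴 × Fin (Fintype.card 𝒳 + 1) => p (t.2.2, t.1, t.2.1))}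

/-- The set over which the single-letter CR formula
`max{I(X;X̂,Ŷ|Y), I(Y;X̂,Ŷ|X)}` is minimised. -/
def crFormulaSet (q : 𝒳 × 𝒴 → ℝ) (δ1 : 𝒳 → Xh → ℝ) (δ2 : 𝒴 → Yh → ℝ)
    (d1 d2 : ℝ) : Set ℝ :=
  {r : ℝ | ∃ W : 𝒳 × 𝒴 → Xh × Yh → ℝ, IsCondPmf W ∧
    (∑ x, ∑ y, ∑ z : Xh × Yh, q (x, y) * W (x, y) z * δ1 x z.1) ≤ d1 ∧
    (∑ x, ∑ y, ∑ z : Xh × Yh, q (x, y) * W (x, y) z * δ2 y z.2) ≤ d2 ∧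
    r = max
      (condMI (fun t : 𝒳 × 𝒴 × (Xh × Yh) => q (t.1, t.2.1) * W (t.1, t.2.1) t.2.2))
      (condMI (fun t : 𝒴 × 𝒳 × (Xh × Yh) => q (t.2.1, t.1) * W (t.2.1, t.1) t.2.2))}

/-- Joint law of source blocks and channel outputs for a JSC encoder. -/
def jscP (q : 𝒳 × 𝒴 → ℝ) (qUV : 𝒲 → 𝒰 × 𝒱 → ℝ) {n m : ℕ}
    (f : (Fin n → 𝒳) × (Fin n → 𝒴) → Fin m → 𝒲)
    (x : Fin n → 𝒳) (y : Fin n → 𝒴) (u : Fin m → 𝒰) (v : Fin m → 𝒱) : ℝ :=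
  (∏ i, q (x i, y i)) * ∏ j, qUV (f (x, y) j) (u j, v j)

/-- `(d1,d2)` is achievable by joint source-channel coding with source rate `κs`
and channel rate `κc` (bandwidth expansion `κc/κs`). -/
def JSCAchievable (q : 𝒳 × 𝒴 → ℝ) (qUV : 𝒲 → 𝒰 × 𝒱 → ℝ)
    (δ1 : 𝒳 → Xh → ℝ) (δ2 : 𝒴 → Yh → ℝ) (κs κc d1 d2 : ℝ) : Prop :=
  ∀ ε > (0 : ℝ), ∃ (t n m : ℕ) (f : (Fin n → 𝒳) × (Fin n → 𝒴) → Fin m → 𝒲)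
    (g1 : (Fin m → 𝒰) × (Fin n → 𝒴) → Fin n → Xh)
    (g2 : (Fin m → 𝒱) × (Fin n → 𝒳) → Fin n → Yh),
    0 < t ∧ (n : ℝ) = κs * t ∧ (m : ℝ) = κc * t ∧
    (∑ x : Fin n → 𝒳, ∑ y : Fin n → 𝒴, ∑ u : Fin m → 𝒰, ∑ v : Fin m → 𝒱,
      jscP q qUV f x y u v * ((n : ℝ)⁻¹ * ∑ i, δ1 (x i) (g1 (u, y) i))) ≤ d1 + ε ∧
    (∑ x : Fin n → 𝒳, ∑ y : Fin n → 𝒴, ∑ u : Fin m → 𝒰, ∑ v : Fin m → 𝒱,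
      jscP q qUV f x y u v * ((n : ℝ)⁻¹ * ∑ i, δ2 (y i) (g2 (v, x) i))) ≤ d2 + ε

/-- `(d1,d2)` is achievable by joint source-channel coding with common
reconstructions, source rate `κs` and channel rate `κc`. -/
def CRJSCAchievable (q : 𝒳 × 𝒴 → ℝ) (qUV : 𝒲 → 𝒰 × 𝒱 → ℝ)
    (δ1 : 𝒳 → Xh → ℝ) (δ2 : 𝒴 → Yh → ℝ) (κs κc d1 d2 : ℝ) : Prop :=
  ∀ ε > (0 : ℝ), ∃ (t n m : ℕ) (f : (Fin n → 𝒳) × (Fin n → 𝒴) → Fin m → 𝒲)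
    (g1 : (Fin m → 𝒰) × (Fin n → 𝒴) → Fin n → Xh)
    (g2 : (Fin m → 𝒱) × (Fin n → 𝒳) → Fin n → Yh)
    (φ1 : (Fin m → 𝒰) × (Fin n → 𝒴) → Fin n → Yh)
    (φ2 : (Fin m → 𝒱) × (Fin n → 𝒳) → Fin n → Xh),
    0 < t ∧ (n : ℝ) = κs * t ∧ (m : ℝ) = κc * t ∧
    (∑ x : Fin n → 𝒳, ∑ y : Fin n → 𝒴, ∑ u : Fin m → 𝒰, ∑ v : Fin m → 𝒱,
      jscP q qUV f x y u v * ((n : ℝ)⁻¹ * ∑ i, δ1 (x i) (g1 (u, y) i))) ≤ d1 + ε ∧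
    (∑ x : Fin n → 𝒳, ∑ y : Fin n → 𝒴, ∑ u : Fin m → 𝒰, ∑ v : Fin m → 𝒱,
      jscP q qUV f x y u v * ((n : ℝ)⁻¹ * ∑ i, δ2 (y i) (g2 (v, x) i))) ≤ d2 + ε ∧
    (∑ x : Fin n → 𝒳, ∑ y : Fin n → 𝒴, ∑ u : Fin m → 𝒰, ∑ v : Fin m → 𝒱,
      if φ2 (v, x) = g1 (u, y) then 0 else jscP q qUV f x y u v) ≤ ε ∧
    (∑ x : Fin n → 𝒳, ∑ y : Fin n → 𝒴, ∑ u : Fin m → 𝒰, ∑ v : Fin m → 𝒱,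
      if φ1 (u, y) = g2 (v, x) then 0 else jscP q qUV f x y u v) ≤ ε

/-- `I(W;U)` under the joint law `pW · qUV` (U-marginal of the broadcast channel). -/
def chMIU (qUV : 𝒲 → 𝒰 × 𝒱 → ℝ) (pW : 𝒲 → ℝ) : ℝ :=
  MI (fun t : 𝒲 × 𝒰 => pW t.1 * ∑ v, qUV t.1 (t.2, v))

/-- `I(W;V)` under the joint law `pW · qUV` (V-marginal of the broadcast channel). -/
def chMIV (qUV : 𝒲 → 𝒰 × 𝒱 → ℝ) (pW : 𝒲 → ℝ) : ℝ :=
  MI (fun t : 𝒲 × 𝒱 => pW t.1 * ∑ u, qUV t.1 (u, t.2))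

/-- The doubly symmetric binary source with crossover probability `ρ`. -/
def dsbs (ρ : ℝ) : Bool × Bool → ℝ :=
  fun t => if t.1 = t.2 then (1 - ρ) / 2 else ρ / 2

/-- The Hamming distortion measure. -/
def dHam {α : Type} : α → α → ℝ := fun a b => if a = b then 0 else 1

/-- The binary entropy function (base 2). -/
def binEnt (x : ℝ) : ℝ := -(x * Real.logb 2 x) - (1 - x) * Real.logb 2 (1 - x)

/-- A difference distortion measure built from a per-letter function of the
(modular) difference. -/
def diffD {l : ℕ} (δ : Fin l → ℝ) : Fin l → Fin l → ℝ := fun a b => δ (a - b)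

/-- Capacity of the modulo-additive channel with noise `pN` and input
distortion constraint `d`. -/
def Cadd {l : ℕ} (δ : Fin l → ℝ) (d : ℝ) (pN : Fin l → ℝ) : ℝ :=
  sSup {r : ℝ | ∃ pW : Fin l → ℝ, IsPmf pW ∧ (∑ w, pW w * δ w) ≤ d ∧
    r = MI (fun t : Fin l × Fin l => pW t.1 * pN (t.2 - t.1))}

/-- The minimax (worst-noise) capacity under distortion constraint `d`. -/
def Cworst {l : ℕ} (δ : Fin l → ℝ) (d : ℝ) : ℝ :=
  sInf {r : ℝ | ∃ pN : Fin l → ℝ, IsPmf pN ∧ (∑ x, pN x * δ x) ≤ d ∧ r = Cadd δ d pN}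

/-- Wyner's common information `K(X;Y)` (auxiliary alphabet of size 4). -/
def wynerK (q : 𝒳 × 𝒴 → ℝ) : ℝ :=
  sInf {r : ℝ | ∃ W : 𝒳 × 𝒴 → Fin 4 → ℝ, IsCondPmf W ∧
    Markov (fun t : 𝒳 × Fin 4 × 𝒴 => q (t.1, t.2.2) * W (t.1, t.2.2) t.2.1) ∧
    r = MI (fun t : (𝒳 × 𝒴) × Fin 4 => q t.1 * W t.1 t.2)}

/-- The one-description (Kimura–Uyematsu) upper bound `R_U*(d1,d2)`. -/
def oneDescUB (q : 𝒳 × 𝒴 → ℝ) (δ1 : 𝒳 → Xh → ℝ) (δ2 : 𝒴 → Yh → ℝ) (d1 d2 : ℝ) : ℝ :=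
  sInf {r : ℝ | ∃ W : 𝒳 × 𝒴 → Fin (Fintype.card 𝒳 * Fintype.card 𝒴 + 2) → ℝ,
    IsCondPmf W ∧
    (∃ π1 : Fin (Fintype.card 𝒳 * Fintype.card 𝒴 + 2) × 𝒴 → Xh,
      (∑ x, ∑ y, ∑ c, q (x, y) * W (x, y) c * δ1 x (π1 (c, y))) ≤ d1) ∧
    (∃ π2 : Fin (Fintype.card 𝒳 * Fintype.card 𝒴 + 2) × 𝒳 → Yh,
      (∑ x, ∑ y, ∑ c, q (x, y) * W (x, y) c * δ2 y (π2 (c, x))) ≤ d2) ∧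
    r = max
      (condMI (fun t : 𝒳 × 𝒴 × Fin (Fintype.card 𝒳 * Fintype.card 𝒴 + 2) =>
        q (t.1, t.2.1) * W (t.1, t.2.1) t.2.2))
      (condMI (fun t : 𝒴 × 𝒳 × Fin (Fintype.card 𝒳 * Fintype.card 𝒴 + 2) =>
        q (t.2.1, t.1) * W (t.2.1, t.1) t.2.2))}

end TWR

/-!
Fix a code. Let the output block of receiver 1 be `U`, and average the law of the letters
`((Xᵢ, Yᵢ), X̂ᵢ)` over the time index `i`: this gives a joint law whose source marginal is again
`q`, hence a single-letter test channel `K` with the distortion of the code. Then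
`n I_K(X; X̂ | Y) ≤ I(Xⁿ; U | Yⁿ) ≤ I(Xⁿ, Yⁿ; U) ≤ m I(W; U)`, where `W` is a channel input letter
averaged over time.

The outer two inequalities are single comparisons with a memoryless reference law in a variational
bound for mutual information: a product of letterwise posteriors from below, a product of averaged
output laws from above. Convexity of the rate-distortion function is never needed.

The input law is the same for both receivers. For codes with vanishing excess distortion these
input laws have a limit point, and the existence of a test channel survives the limit because the
test channels form a compact set.
-/

namespace TWR

open Finset Real

section Pmf

variable {α β γ ι : Type} [Fintype α] [Fintype β] [Fintype γ] [Fintype ι]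

/-- The joint law `p(a) W(b|a)` of an input with law `p` and the output of the channel `W`. -/
def compProd (p : α → ℝ) (W : α → β → ℝ) : α × β → ℝ := fun t => p t.1 * W t.1 t.2

/-- A joint law of `((A,B),C)` read as a law of `(A,(B,C))`, the bracketing that `condMI` expects.
Its second marginal is the law of `(B,C)`. -/
def assocLaw (p : (α × β) × γ → ℝ) : α × β × γ → ℝ := fun t => p ((t.1, t.2.1), t.2.2)

lemma sum_mul_congr {Ω : Type*} [Fintype Ω] {P : Ω → ℝ} (hP : ∀ ω, 0 ≤ P ω) {φ ψ : Ω → ℝ}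
    (h : ∀ ω, 0 < P ω → φ ω = ψ ω) : ∑ ω, P ω * φ ω = ∑ ω, P ω * ψ ω := by
  refine sum_congr rfl fun ω _ => ?_
  rcases (hP ω).eq_or_lt with h0 | h0
  · simp [← h0]
  · rw [h ω h0]

lemma sum_margX_mul (p : α × β → ℝ) (φ : α → ℝ) :
    ∑ a, margX p a * φ a = ∑ t, p t * φ t.1 := by
  simp only [margX, Fintype.sum_prod_type, sum_mul]

lemma sum_margY_mul (p : α × β → ℝ) (φ : β → ℝ) :
    ∑ b, margY p b * φ b = ∑ t, p t * φ t.2 := by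
  simp only [margY, Fintype.sum_prod_type_right, sum_mul]

lemma sum_margX (p : α × β → ℝ) : ∑ a, margX p a = ∑ t, p t := by
  simpa using sum_margX_mul p 1

lemma sum_margY (p : α × β → ℝ) : ∑ b, margY p b = ∑ t, p t := by
  simpa using sum_margY_mul p 1

lemma sum_assocLaw_mul (p : (α × β) × γ → ℝ) (φ : α × β × γ → ℝ) :
    ∑ t, assocLaw p t * φ t = ∑ t, p t * φ (t.1.1, t.1.2, t.2) :=
  (Equiv.prodAssoc α β γ).symm.sum_comp fun t => p t * φ (t.1.1, t.1.2, t.2)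

lemma le_margX {α β : Type} [Fintype β] {p : α × β → ℝ} (hp : ∀ t, 0 ≤ p t) (t : α × β) :
    p t ≤ margX p t.1 :=
  single_le_sum (f := fun b => p (t.1, b)) (fun _ _ => hp _) (mem_univ t.2)

lemma margX_pos {α β : Type} [Fintype β] {p : α × β → ℝ} (hp : ∀ t, 0 ≤ p t) {t : α × β}
    (ht : 0 < p t) : 0 < margX p t.1 :=
  ht.trans_le (le_margX hp t)

lemma margY_pos {α β : Type} [Fintype α] {p : α × β → ℝ} (hp : ∀ t, 0 ≤ p t) {t : α × β}
    (ht : 0 < p t) : 0 < margY p t.2 :=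
  margX_pos (p := swap p) (fun _ => hp _) (t := t.swap) ht

lemma margY_assocLaw_pos {α β γ : Type} [Fintype α] {p : (α × β) × γ → ℝ} (hp : ∀ t, 0 ≤ p t)
    {t : (α × β) × γ} (ht : 0 < p t) : 0 < margY (assocLaw p) (t.1.2, t.2) :=
  margY_pos (p := assocLaw p) (fun _ => hp _) (t := (t.1.1, t.1.2, t.2)) ht

protected lemma IsPmf.margX {p : α × β → ℝ} (hp : IsPmf p) : IsPmf (margX p) :=
  ⟨fun _ => sum_nonneg fun _ _ => hp.1 _, by rw [sum_margX, hp.2]⟩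

protected lemma IsPmf.margY {p : α × β → ℝ} (hp : IsPmf p) : IsPmf (margY p) :=
  ⟨fun _ => sum_nonneg fun _ _ => hp.1 _, by rw [sum_margY, hp.2]⟩

protected lemma IsPmf.swap {p : α × β → ℝ} (hp : IsPmf p) : IsPmf (swap p) :=
  ⟨fun _ => hp.1 _, ((Equiv.prodComm β α).sum_comp p).trans hp.2⟩

protected lemma IsPmf.assocLaw {p : (α × β) × γ → ℝ} (hp : IsPmf p) : IsPmf (assocLaw p) :=
  ⟨fun _ => hp.1 _, ((Equiv.prodAssoc α β γ).symm.sum_comp p).trans hp.2⟩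

protected lemma IsPmf.pi [DecidableEq ι] {p : ι → α → ℝ} (hp : ∀ i, IsPmf (p i)) :
    IsPmf fun a : ι → α => ∏ i, p i (a i) :=
  ⟨fun _ => prod_nonneg fun i _ => (hp i).1 _, by simp [← Fintype.prod_sum, (hp _).2]⟩

lemma IsPmf.exists_pos {p : α → ℝ} (hp : IsPmf p) : ∃ a, 0 < p a := by
  by_contra! h
  linarith [hp.2, sum_nonpos fun a (_ : a ∈ univ) => h a]

lemma margX_compProd {α β : Type} [Fintype β] (p : α → ℝ) {W : α → β → ℝ} (hW : IsCondPmf W) :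
    margX (compProd p W) = p := by
  funext a
  simp only [margX, compProd, ← mul_sum, (hW a).2, mul_one]

protected lemma IsPmf.compProd {p : α → ℝ} (hp : IsPmf p) {W : α → β → ℝ} (hW : IsCondPmf W) :
    IsPmf (compProd p W) :=
  ⟨fun _ => mul_nonneg (hp.1 _) ((hW _).1 _), by rw [← sum_margX, margX_compProd p hW, hp.2]⟩

lemma IsPmf.exists_compProd_eq {r : α × β → ℝ} (hr : IsPmf r) :
    ∃ K : α → β → ℝ, IsCondPmf K ∧ compProd (margX r) K = r := by
  obtain ⟨⟨-, b₀⟩, -⟩ := hr.exists_pos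
  refine ⟨fun a b => if margX r a = 0 then (Pi.single b₀ 1 : β → ℝ) b else r (a, b) / margX r a,
    fun a => ?_, funext fun ⟨a, b⟩ => ?_⟩
  · by_cases h : margX r a = 0
    · simp only [h, if_true]
      exact single_mem_stdSimplex ℝ b₀
    · simp only [h, if_false]
      exact ⟨fun b => div_nonneg (hr.1 _) (hr.margX.1 a), by rw [← sum_div]; exact div_self h⟩
  · by_cases h : margX r a = 0
    · have hab : r (a, b) = 0 := le_antisymm (h ▸ le_margX hr.1 (a, b)) (hr.1 _)
      simp [compProd, h, hab]
    · simp [compProd, h, mul_div_cancel₀]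

lemma isCompact_setOf_isPmf (α : Type) [Fintype α] : IsCompact {p : α → ℝ | IsPmf p} :=
  isCompact_stdSimplex ℝ α

lemma isCompact_setOf_isCondPmf (α β : Type) [Fintype β] :
    IsCompact {K : α → β → ℝ | IsCondPmf K} := by
  have h := isCompact_univ_pi fun _ : α => isCompact_setOf_isPmf β
  rwa [show Set.univ.pi (fun _ : α => {p : β → ℝ | IsPmf p}) = {K | IsCondPmf K} by
    ext K; simp [IsCondPmf]] at h

end Pmf

section Gibbs

variable {Ω : Type*} [Fintype Ω] {b : ℝ}

lemma mul_logb_sub_mul_logb_le {x y : ℝ} (hb : 1 < b) (hx : 0 ≤ x) (hy : 0 ≤ y)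
    (hxy : 0 < x → 0 < y) :
    x * logb b y - x * logb b x ≤ (y - x) / log b := by
  have hlog : 0 < log b := log_pos hb
  rcases hx.eq_or_lt with rfl | hx
  · simpa using div_nonneg hy hlog.le
  have hy := hxy hx
  calc x * logb b y - x * logb b x = x * log (y / x) / log b := by
        rw [log_div hy.ne' hx.ne', logb, logb]; ring
    _ ≤ x * (y / x - 1) / log b := by gcongr; exact log_le_sub_one_of_pos (div_pos hy hx)
    _ = (y - x) / log b := by field_simp

theorem sum_mul_logb_le_sum_mul_logb (hb : 1 < b) {P M : Ω → ℝ} (hP : ∀ ω, 0 ≤ P ω)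
    (hM : ∀ ω, 0 ≤ M ω) (hPM : ∀ ω, 0 < P ω → 0 < M ω) (hsum : ∑ ω, M ω ≤ ∑ ω, P ω) :
    ∑ ω, P ω * logb b (M ω) ≤ ∑ ω, P ω * logb b (P ω) := by
  rw [← sub_nonpos, ← sum_sub_distrib]
  calc ∑ ω, (P ω * logb b (M ω) - P ω * logb b (P ω))
      ≤ ∑ ω, (M ω - P ω) / log b :=
        sum_le_sum fun ω _ => mul_logb_sub_mul_logb_le hb (hP ω) (hM ω) (hPM ω)
    _ = (∑ ω, M ω - ∑ ω, P ω) / log b := by rw [← sum_div, sum_sub_distrib]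
    _ ≤ 0 := div_nonpos_of_nonpos_of_nonneg (sub_nonpos.2 hsum) (log_pos hb).le

end Gibbs

section MutualInformation

variable {α β γ : Type} [Fintype α] [Fintype β] [Fintype γ]

lemma MI_eq_sum (p : α × β → ℝ) :
    MI p = ∑ t, p t * (logb 2 (p t) - logb 2 (margX p t.1) - logb 2 (margY p t.2)) := by
  simp only [mul_sub, sum_sub_distrib, ← sum_margX_mul p fun a => logb 2 (margX p a),
    ← sum_margY_mul p fun b => logb 2 (margY p b)]
  simp only [MI, H2, margX, margY]
  ring

lemma condMI_assocLaw (p : (α × β) × γ → ℝ) :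
    condMI (assocLaw p) =
      H2 (margX p) + H2 (margY (assocLaw p)) - H2 p - H2 (margY (margX p)) := by
  have h : H2 (assocLaw p) = H2 p :=
    congrArg Neg.neg (sum_assocLaw_mul p fun t => logb 2 (assocLaw p t))
  rw [← h]
  rfl

lemma condMI_assocLaw_eq_sum (p : (α × β) × γ → ℝ) :
    condMI (assocLaw p) = ∑ t, p t * (logb 2 (p t) + logb 2 (margY (margX p) t.1.2)
      - logb 2 (margX p t.1) - logb 2 (margY (assocLaw p) (t.1.2, t.2))) := by
  have hB : ∑ t, p t * logb 2 (margY (margX p) t.1.2) =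
      ∑ b, margY (margX p) b * logb 2 (margY (margX p) b) := by
    rw [sum_margY_mul (margX p) fun b => logb 2 (margY (margX p) b)]
    exact (sum_margX_mul p fun s => logb 2 (margY (margX p) s.2)).symm
  have hBC : ∑ t, p t * logb 2 (margY (assocLaw p) (t.1.2, t.2)) =
      ∑ bc, margY (assocLaw p) bc * logb 2 (margY (assocLaw p) bc) := by
    rw [sum_margY_mul (assocLaw p) fun bc => logb 2 (margY (assocLaw p) bc)]
    exact (sum_assocLaw_mul p fun t => logb 2 (margY (assocLaw p) t.2)).symm
  simp only [mul_sub, mul_add, sum_sub_distrib, sum_add_distrib, hB, hBC,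
    ← sum_margX_mul p fun s => logb 2 (margX p s)]
  rw [condMI_assocLaw]
  simp only [H2]
  ring

lemma MI_eq_condMI_add_MI (p : (α × β) × γ → ℝ) :
    MI p = condMI (assocLaw p) + MI (margY (assocLaw p)) := by
  have hB : margX (margY (assocLaw p)) = margY (margX p) := funext fun b => sum_comm
  have hC : margY (margY (assocLaw p)) = margY p :=
    funext fun c => (Fintype.sum_prod_type_right fun s => p (s, c)).symm
  have hMI : ∀ {α β : Type} [Fintype α] [Fintype β] (p : α × β → ℝ),
      MI p = H2 (margX p) + H2 (margY p) - H2 p := fun _ => rfl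
  rw [condMI_assocLaw, hMI, hMI, hB, hC]
  ring

/-- Replacing the true output law by any other one can only overestimate the information. -/
lemma MI_le_sum {p : α × β → ℝ} (hp : ∀ t, 0 ≤ p t) {r : β → ℝ} (hr : ∀ b, 0 ≤ r b)
    (hpr : ∀ t, 0 < p t → 0 < r t.2) (hsum : ∑ b, r b ≤ ∑ t, p t) :
    MI p ≤ ∑ t, p t * (logb 2 (p t) - logb 2 (margX p t.1) - logb 2 (r t.2)) := by
  have hpos : ∀ b, 0 < margY p b → 0 < r b := fun b hb => by
    obtain ⟨a, -, ha⟩ := (sum_pos_iff_of_nonneg fun a _ => hp (a, b)).1 hb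
    exact hpr (a, b) ha
  have hgibbs := sum_mul_logb_le_sum_mul_logb (P := margY p) one_lt_two
    (fun b => sum_nonneg fun a _ => hp (a, b)) hr hpos (hsum.trans (sum_margY p).ge)
  rw [MI_eq_sum]
  simp only [mul_sub, sum_sub_distrib]
  rw [← sum_margY_mul p fun b => logb 2 (margY p b), ← sum_margY_mul p fun b => logb 2 (r b)]
  linarith

lemma logb_compProd_sub_logb_margX {α β : Type} [Fintype β] {p : α → ℝ} {W : α → β → ℝ}
    (hW : IsCondPmf W) {t : α × β} (ht : compProd p W t ≠ 0) :
    logb 2 (compProd p W t) - logb 2 (margX (compProd p W) t.1) = logb 2 (W t.1 t.2) := by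
  rw [margX_compProd p hW, compProd, logb_mul (left_ne_zero_of_mul ht) (right_ne_zero_of_mul ht),
    add_sub_cancel_left]

lemma MI_compProd_eq_sum {p : α → ℝ} (hp : IsPmf p) {W : α → β → ℝ} (hW : IsCondPmf W) :
    MI (compProd p W) = ∑ t, compProd p W t *
      (logb 2 (W t.1 t.2) - logb 2 (margY (compProd p W) t.2)) := by
  rw [MI_eq_sum]
  exact sum_mul_congr (hp.compProd hW).1 fun t ht => by
    rw [logb_compProd_sub_logb_margX hW ht.ne']

lemma MI_compProd_le_sum {p : α → ℝ} (hp : IsPmf p) {W : α → β → ℝ} (hW : IsCondPmf W)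
    {r : β → ℝ} (hr : IsPmf r) (hWr : ∀ t, 0 < compProd p W t → 0 < r t.2) :
    MI (compProd p W) ≤ ∑ t, compProd p W t * (logb 2 (W t.1 t.2) - logb 2 (r t.2)) := by
  have hpW := hp.compProd hW
  refine (MI_le_sum hpW.1 hr.1 hWr (hr.2.trans hpW.2.symm).le).trans_eq ?_
  exact sum_mul_congr hpW.1 fun t ht => by rw [logb_compProd_sub_logb_margX hW ht.ne']

lemma IsPmf.MI_nonneg {p : α × β → ℝ} (hp : IsPmf p) : 0 ≤ MI p := by
  have hprod : IsPmf (compProd (margX p) fun _ => margY p) :=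
    hp.margX.compProd fun _ => hp.margY
  have hgibbs := sum_mul_logb_le_sum_mul_logb one_lt_two hp.1 hprod.1
    (fun t ht => mul_pos (margX_pos hp.1 ht) (margY_pos hp.1 ht)) (hprod.2.trans hp.2.symm).le
  calc 0 ≤ ∑ t, p t * logb 2 (p t)
        - ∑ t, p t * logb 2 (compProd (margX p) (fun _ => margY p) t) :=
        sub_nonneg.2 hgibbs
    _ = MI p := by
        rw [MI_eq_sum, ← sum_sub_distrib]
        simp only [← mul_sub]
        refine sum_mul_congr hp.1 fun t ht => ?_
        rw [compProd, logb_mul (margX_pos hp.1 ht).ne' (margY_pos hp.1 ht).ne']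
        ring

lemma IsPmf.condMI_le_MI {p : (α × β) × γ → ℝ} (hp : IsPmf p) :
    condMI (assocLaw p) ≤ MI p := by
  rw [MI_eq_condMI_add_MI]
  exact le_add_of_nonneg_right hp.assocLaw.margY.MI_nonneg

/-- Replacing the true posterior of `A` given `(B, C)` by any other backward channel `k` can only
underestimate the conditional information. -/
lemma sum_le_condMI {p k : (α × β) × γ → ℝ} (hp : ∀ t, 0 ≤ p t) (hk : ∀ t, 0 ≤ k t)
    (hpk : ∀ t, 0 < p t → 0 < k t) (hsum : ∀ bc, margY (assocLaw k) bc ≤ 1) :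
    ∑ t, p t * (logb 2 (k t) + logb 2 (margY (margX p) t.1.2) - logb 2 (margX p t.1))
      ≤ condMI (assocLaw p) := by
  set pBC := margY (assocLaw p)
  have hpBC0 : ∀ bc, 0 ≤ pBC bc := fun bc => sum_nonneg fun a _ => hp _
  have hle : ∑ t, pBC (t.1.2, t.2) * k t ≤ ∑ t, p t :=
    calc ∑ t, pBC (t.1.2, t.2) * k t = ∑ bc, margY (assocLaw k) bc * pBC bc := by
          rw [sum_margY_mul (assocLaw k) pBC, sum_assocLaw_mul k fun t => pBC t.2]
          exact sum_congr rfl fun _ _ => mul_comm _ _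
      _ ≤ ∑ bc, pBC bc := sum_le_sum fun bc _ => mul_le_of_le_one_left (hpBC0 bc) (hsum bc)
      _ = ∑ t, p t := by
          rw [sum_margY]
          exact (Equiv.prodAssoc α β γ).symm.sum_comp p
  have hgibbs := sum_mul_logb_le_sum_mul_logb one_lt_two hp
    (fun t => mul_nonneg (hpBC0 _) (hk t))
    (fun t ht => mul_pos (margY_assocLaw_pos hp ht) (hpk t ht)) hle
  rw [sum_mul_congr hp fun t ht => logb_mul (margY_assocLaw_pos hp ht).ne' (hpk t ht).ne'] at hgibbs
  rw [condMI_assocLaw_eq_sum]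
  simp only [mul_sub, mul_add, sum_sub_distrib, sum_add_distrib] at hgibbs ⊢
  linarith

lemma condMI_nonneg {p : (α × β) × γ → ℝ} (hp : ∀ t, 0 ≤ p t) : 0 ≤ condMI (assocLaw p) := by
  have hAB : ∀ s, 0 ≤ margX p s := fun s => sum_nonneg fun _ _ => hp _
  have hABpos : ∀ t, 0 < p t → 0 < margX p t.1 := fun t ht => margX_pos hp ht
  have hBpos : ∀ t, 0 < p t → 0 < margY (margX p) t.1.2 := fun t ht => margY_pos hAB (hABpos t ht)
  calc (0 : ℝ) = ∑ t, p t * 0 := by simp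
    _ = ∑ t, p t * (logb 2 (margX p t.1 / margY (margX p) t.1.2)
          + logb 2 (margY (margX p) t.1.2) - logb 2 (margX p t.1)) :=
        sum_mul_congr hp fun t ht => by
          rw [logb_div (hABpos t ht).ne' (hBpos t ht).ne']
          ring
    _ ≤ condMI (assocLaw p) := by
        refine sum_le_condMI hp (fun t => div_nonneg (hAB _) (sum_nonneg fun _ _ => hAB _))
          (fun t ht => div_pos (hABpos t ht) (hBpos t ht)) fun bc => ?_
        simp only [margY, assocLaw, ← sum_div]
        exact div_self_le_one _

end MutualInformation

section AverageLaw

variable {ι Ω α β : Type} [Fintype ι] [Fintype Ω]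

/-- The law of `A I`, where `ω` has law `P` and the time index `I` is independent of `ω` and
uniform on `ι`: the time-sharing law through which block codes are single-letterized. -/
def avgLaw (P : Ω → ℝ) (A : ι → Ω → α) : α → ℝ :=
  fun a => (Fintype.card ι : ℝ)⁻¹ * ∑ i, ∑ ω with A i ω = a, P ω

lemma avgLaw_nonneg {P : Ω → ℝ} (hP : ∀ ω, 0 ≤ P ω) (A : ι → Ω → α) (a : α) :
    0 ≤ avgLaw P A a :=
  mul_nonneg (by positivity) (sum_nonneg fun _ _ => sum_nonneg fun _ _ => hP _)

lemma avgLaw_pos {P : Ω → ℝ} (hP : ∀ ω, 0 ≤ P ω) (A : ι → Ω → α) (i : ι) {ω : Ω}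
    (hω : 0 < P ω) : 0 < avgLaw P A (A i ω) := by
  have : Nonempty ι := ⟨i⟩
  have hfib : P ω ≤ ∑ ω' with A i ω' = A i ω, P ω' :=
    single_le_sum (fun ω' _ => hP ω') (mem_filter.2 ⟨mem_univ ω, rfl⟩)
  have hsum : ∑ ω' with A i ω' = A i ω, P ω' ≤ ∑ j, ∑ ω' with A j ω' = A i ω, P ω' :=
    single_le_sum (f := fun j => ∑ ω' with A j ω' = A i ω, P ω')
      (fun _ _ => sum_nonneg fun ω' _ => hP ω') (mem_univ i)
  exact mul_pos (by positivity) (hω.trans_le (hfib.trans hsum))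

lemma avgLaw_comp_equiv {Ω' : Type} [Fintype Ω'] (e : Ω' ≃ Ω) (P : Ω → ℝ) (A : ι → Ω → α) :
    avgLaw (P ∘ e) (fun i ω => A i (e ω)) = avgLaw P A := by
  funext a
  simp only [avgLaw, sum_filter]
  exact congrArg _ (sum_congr rfl fun i _ => e.sum_comp fun ω => if A i ω = a then P ω else 0)

lemma avgLaw_comp_fst [Fintype β] (p : Ω × β → ℝ) (A : ι → Ω → α) :
    avgLaw p (fun i t => A i t.1) = avgLaw (margX p) A := by
  funext a
  simp only [avgLaw, sum_filter, ← mul_boole _ (p _), ← mul_boole _ (margX p _)]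
  exact congrArg _ (sum_congr rfl fun i _ =>
    (sum_margX_mul p fun ω => if A i ω = a then (1 : ℝ) else 0).symm)

lemma margX_avgLaw [Fintype β] (P : Ω → ℝ) (A : ι → Ω → α × β) :
    margX (avgLaw P A) = avgLaw P fun i ω => (A i ω).1 := by
  funext a
  simp only [margX, avgLaw, ← mul_sum]
  rw [sum_comm]
  refine congrArg _ (sum_congr rfl fun i _ => ?_)
  rw [← sum_fiberwise _ fun ω => (A i ω).2]
  simp only [filter_filter, Prod.ext_iff]

variable [Fintype α]

lemma sum_avgLaw_mul (P : Ω → ℝ) (A : ι → Ω → α) (φ : α → ℝ) :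
    ∑ a, avgLaw P A a * φ a = (Fintype.card ι : ℝ)⁻¹ * ∑ i, ∑ ω, P ω * φ (A i ω) := by
  have hfib : ∀ i, ∑ a, (∑ ω with A i ω = a, P ω) * φ a = ∑ ω, P ω * φ (A i ω) := fun i => by
    rw [← sum_fiberwise univ (A i)]
    refine sum_congr rfl fun a _ => ?_
    rw [sum_mul]
    exact sum_congr rfl fun ω hω => by rw [(mem_filter.1 hω).2]
  simp only [avgLaw, mul_assoc, ← mul_sum, ← hfib]
  rw [sum_comm]
  simp only [sum_mul]

lemma card_mul_sum_avgLaw_mul [Nonempty ι] (P : Ω → ℝ) (A : ι → Ω → α) (φ : α → ℝ) :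
    Fintype.card ι * ∑ a, avgLaw P A a * φ a = ∑ ω, P ω * ∑ i, φ (A i ω) := by
  rw [sum_avgLaw_mul, mul_inv_cancel_left₀ (Nat.cast_ne_zero.2 Fintype.card_ne_zero), sum_comm]
  simp only [mul_sum]

protected lemma IsPmf.avgLaw [Nonempty ι] {P : Ω → ℝ} (hP : IsPmf P) (A : ι → Ω → α) :
    IsPmf (avgLaw P A) := by
  refine ⟨avgLaw_nonneg hP.1 A, ?_⟩
  simpa [hP.2] using sum_avgLaw_mul P A 1

end AverageLaw

section ProductLaw

variable {ι α β : Type} [Fintype ι] [DecidableEq ι] [Fintype α]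

lemma sum_prod_mul_apply {p : ι → α → ℝ} (hp : ∀ i, IsPmf (p i)) (j : ι) (φ : α → ℝ) :
    ∑ a : ι → α, (∏ i, p i (a i)) * φ (a j) = ∑ b, p j b * φ b := by
  have hfactor : ∀ a : ι → α, (∏ i, p i (a i)) * φ (a j) =
      ∏ i, p i (a i) * if i = j then φ (a i) else 1 := fun a => by
    rw [prod_mul_distrib, prod_ite_eq' univ j fun i => φ (a i), if_pos (mem_univ j)]
  simp only [hfactor]
  rw [← Fintype.prod_sum fun i b => p i b * if i = j then φ b else 1,
    Fintype.prod_eq_single j fun i hij => by simp [hij, (hp i).2]]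
  simp

lemma margY_iid (q : α × β → ℝ) (n : ℕ) (y : Fin n → β) :
    margY (iid q n) y = ∏ i, margY q (y i) :=
  (Fintype.prod_sum fun i a => q (a, y i)).symm

variable [Fintype β]

lemma sum_iid_mul (q : α × β → ℝ) (n : ℕ) (Φ : (Fin n → α) × (Fin n → β) → ℝ) :
    ∑ s, iid q n s * Φ s =
      ∑ s : Fin n → α × β, (∏ i, q (s i)) * Φ (fun i => (s i).1, fun i => (s i).2) :=
  ((Equiv.arrowProdEquivProdArrow (Fin n) (fun _ => α) fun _ => β).sum_comp
    fun s => iid q n s * Φ s).symm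

protected lemma IsPmf.iid {q : α × β → ℝ} (hq : IsPmf q) (n : ℕ) : IsPmf (iid q n) := by
  refine ⟨fun _ => prod_nonneg fun _ _ => hq.1 _, ?_⟩
  have h := sum_iid_mul q n 1
  simp only [Pi.one_apply, mul_one] at h
  exact h.trans (IsPmf.pi fun _ => hq).2

lemma avgLaw_iid {q : α × β → ℝ} (hq : IsPmf q) (n : ℕ) [NeZero n] :
    avgLaw (iid q n) (fun i s => (s.1 i, s.2 i)) = q := by
  refine dotProduct_eq _ _ fun φ => ?_
  have hletter : ∀ i, ∑ s, iid q n s * φ (s.1 i, s.2 i) = ∑ t, q t * φ t := fun i => by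
    rw [sum_iid_mul q n fun s => φ (s.1 i, s.2 i)]
    exact sum_prod_mul_apply (fun _ => hq) i φ
  rw [dotProduct, sum_avgLaw_mul]
  simp [hletter, dotProduct, NeZero.ne n]

lemma margX_avgLaw_of_margX_eq_iid {q : α × β → ℝ} (hq : IsPmf q) {n : ℕ} [NeZero n]
    {υ ζ : Type} [Fintype υ] [Fintype ζ] {p : ((Fin n → α) × (Fin n → β)) × υ → ℝ}
    (hpq : margX p = iid q n) (z : ((Fin n → α) × (Fin n → β)) × υ → Fin n → ζ) :
    margX (avgLaw p fun i t => ((t.1.1 i, t.1.2 i), z t i)) = q := by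
  rw [margX_avgLaw, avgLaw_comp_fst p fun i s => (s.1 i, s.2 i), hpq, avgLaw_iid hq]

end ProductLaw

section ChannelConverse

variable {ι σ η υ : Type} [Fintype ι] [DecidableEq ι] [Fintype υ]

/-- The channel from a source `s` to the output block of the memoryless channel `c` when `s` is
encoded as the input block `f s`. -/
def blockChannel (c : η → υ → ℝ) (f : σ → ι → η) : σ → (ι → υ) → ℝ :=
  fun s u => ∏ j, c (f s j) (u j)

lemma isCondPmf_blockChannel {c : η → υ → ℝ} (hc : IsCondPmf c) (f : σ → ι → η) :
    IsCondPmf (blockChannel c f) :=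
  fun s => IsPmf.pi fun j => hc (f s j)

lemma avgLaw_compProd_blockChannel [Fintype σ] [Finite η] {c : η → υ → ℝ}
    (hc : IsCondPmf c) (f : σ → ι → η) (p : σ → ℝ) :
    avgLaw (compProd p (blockChannel c f)) (fun j t => (f t.1 j, t.2 j)) =
      compProd (avgLaw p fun j s => f s j) c := by
  cases nonempty_fintype η
  refine dotProduct_eq _ _ fun φ => ?_
  have hletter : ∀ j, ∑ t, compProd p (blockChannel c f) t * φ (f t.1 j, t.2 j) =
      ∑ s, p s * ∑ b, c (f s j) b * φ (f s j, b) := fun j => by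
    rw [Fintype.sum_prod_type]
    refine sum_congr rfl fun s _ => ?_
    rw [← sum_prod_mul_apply (fun i => hc (f s i)) j fun b => φ (f s j, b), mul_sum]
    simp only [compProd, blockChannel, mul_assoc]
  rw [dotProduct, sum_avgLaw_mul]
  simp only [hletter]
  rw [← sum_avgLaw_mul p (fun j s => f s j) fun w => ∑ b, c w b * φ (w, b), dotProduct,
    Fintype.sum_prod_type]
  simp only [compProd, mul_sum, mul_assoc]

theorem MI_compProd_blockChannel_le [Nonempty ι] [Fintype σ] [Fintype η] {p : σ → ℝ}
    (hp : IsPmf p) {c : η → υ → ℝ} (hc : IsCondPmf c) (f : σ → ι → η) :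
    MI (compProd p (blockChannel c f)) ≤
      Fintype.card ι * MI (compProd (avgLaw p fun j s => f s j) c) := by
  set P := compProd p (blockChannel c f)
  set R := compProd (avgLaw p fun j s => f s j) c
  have hf := isCondPmf_blockChannel hc f
  have hP : IsPmf P := hp.compProd hf
  have hR : IsPmf R := (hp.avgLaw _).compProd hc
  have hPR : avgLaw P (fun j t => (f t.1 j, t.2 j)) = R := avgLaw_compProd_blockChannel hc f p
  have hRpos : ∀ t, 0 < P t → ∀ j, 0 < R (f t.1 j, t.2 j) := fun t ht j => by
    rw [← hPR]
    exact avgLaw_pos hP.1 (fun j t => (f t.1 j, t.2 j)) j ht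
  have hRY : ∀ t, 0 < P t → ∀ j, 0 < margY R (t.2 j) := fun t ht j =>
    margY_pos hR.1 (hRpos t ht j)
  calc MI P
      ≤ ∑ t, P t * (logb 2 (∏ j, c (f t.1 j) (t.2 j)) - logb 2 (∏ j, margY R (t.2 j))) :=
        MI_compProd_le_sum hp hf (r := fun u => ∏ j, margY R (u j)) (IsPmf.pi fun _ => hR.margY)
          fun t ht => prod_pos fun j _ => hRY t ht j
    _ = ∑ t, P t * ∑ j, (logb 2 (c (f t.1 j) (t.2 j)) - logb 2 (margY R (t.2 j))) :=
        sum_mul_congr hP.1 fun t ht => by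
          rw [logb_prod _ _ fun j _ => right_ne_zero_of_mul (hRpos t ht j).ne',
            logb_prod _ _ fun j _ => (hRY t ht j).ne', sum_sub_distrib]
    _ = Fintype.card ι * ∑ t, R t * (logb 2 (c t.1 t.2) - logb 2 (margY R t.2)) := by
        rw [← hPR, card_mul_sum_avgLaw_mul]
    _ = Fintype.card ι * MI R := by rw [MI_compProd_eq_sum (hp.avgLaw _) hc]

end ChannelConverse

section SourceConverse

variable {α β ζ υ : Type} [Fintype α]

/-- The product of the letterwise posteriors is a backward channel from blocks to blocks. -/
lemma margY_assocLaw_prod_posterior_le_one {r : (α × β) × ζ → ℝ} (hr : ∀ t, 0 ≤ r t) (n : ℕ)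
    (z : (Fin n → β) × υ → Fin n → ζ) (yu : (Fin n → β) × υ) :
    margY (assocLaw fun t : ((Fin n → α) × (Fin n → β)) × υ =>
      ∏ i, r ((t.1.1 i, t.1.2 i), z (t.1.2, t.2) i) /
        margY (assocLaw r) (t.1.2 i, z (t.1.2, t.2) i)) yu ≤ 1 := by
  have hrY : ∀ bc, 0 ≤ margY (assocLaw r) bc := fun _ => sum_nonneg fun _ _ => hr _
  calc _ = ∏ i, margY (assocLaw r) (yu.1 i, z yu i) / margY (assocLaw r) (yu.1 i, z yu i) := by
        refine (Fintype.prod_sum fun i a => r ((a, yu.1 i), z yu i) /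
          margY (assocLaw r) (yu.1 i, z yu i)).symm.trans ?_
        simp only [← sum_div]
        rfl
    _ ≤ 1 := prod_le_one (fun i _ => div_nonneg (hrY _) (hrY _)) fun i _ => div_self_le_one _

variable [Fintype β] [Fintype ζ] [Fintype υ]

theorem mul_condMI_avgLaw_le {q : α × β → ℝ} (hq : IsPmf q) {n : ℕ} [NeZero n]
    {p : ((Fin n → α) × (Fin n → β)) × υ → ℝ} (hp : ∀ t, 0 ≤ p t) (hpq : margX p = iid q n)
    (z : (Fin n → β) × υ → Fin n → ζ) :
    n * condMI (assocLaw (avgLaw p fun i t => ((t.1.1 i, t.1.2 i), z (t.1.2, t.2) i))) ≤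
      condMI (assocLaw p) := by
  set A : Fin n → ((Fin n → α) × (Fin n → β)) × υ → (α × β) × ζ :=
    fun i t => ((t.1.1 i, t.1.2 i), z (t.1.2, t.2) i)
  set r := avgLaw p A
  set rYZ := margY (assocLaw r)
  have hr : ∀ t, 0 ≤ r t := avgLaw_nonneg hp A
  have hrX : margX r = q := margX_avgLaw_of_margX_eq_iid hq hpq fun t => z (t.1.2, t.2)
  have hrpos : ∀ t, 0 < p t → ∀ i, 0 < r (A i t) := fun t ht i => avgLaw_pos hp A i ht
  have hrYZ : ∀ t, 0 < p t → ∀ i, 0 < rYZ ((A i t).1.2, (A i t).2) := fun t ht i =>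
    margY_assocLaw_pos hr (hrpos t ht i)
  have hqpos : ∀ t, 0 < p t → ∀ i, 0 < q (A i t).1 := fun t ht i =>
    hrX ▸ margX_pos hr (hrpos t ht i)
  have hqY : ∀ t, 0 < p t → ∀ i, 0 < margY q (A i t).1.2 := fun t ht i =>
    margY_pos hq.1 (hqpos t ht i)
  calc n * condMI (assocLaw r)
      = Fintype.card (Fin n) * ∑ a, r a * (logb 2 (r a) + logb 2 (margY q a.1.2)
          - logb 2 (q a.1) - logb 2 (rYZ (a.1.2, a.2))) := by
        rw [condMI_assocLaw_eq_sum, hrX, Fintype.card_fin]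
    _ = ∑ t, p t * ∑ i, (logb 2 (r (A i t)) + logb 2 (margY q (A i t).1.2)
          - logb 2 (q (A i t).1) - logb 2 (rYZ ((A i t).1.2, (A i t).2))) :=
        card_mul_sum_avgLaw_mul p A _
    _ = ∑ t, p t * (logb 2 (∏ i, r (A i t) / rYZ ((A i t).1.2, (A i t).2))
          + logb 2 (margY (margX p) t.1.2) - logb 2 (margX p t.1)) := by
        refine sum_mul_congr hp fun t ht => ?_
        rw [hpq, margY_iid, logb_prod _ _ fun i _ => (div_pos (hrpos t ht i) (hrYZ t ht i)).ne',
          logb_prod _ _ fun i _ => (hqY t ht i).ne',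
          show iid q n t.1 = ∏ i, q (A i t).1 from rfl,
          logb_prod _ _ fun i _ => (hqpos t ht i).ne', ← sum_add_distrib, ← sum_sub_distrib]
        refine sum_congr rfl fun i _ => ?_
        rw [logb_div (hrpos t ht i).ne' (hrYZ t ht i).ne']
        ring
    _ ≤ condMI (assocLaw p) :=
        sum_le_condMI hp
          (fun t => prod_nonneg fun i _ => div_nonneg (hr _) (sum_nonneg fun _ _ => hr _))
          (fun t ht => prod_pos fun i _ => div_pos (hrpos t ht i) (hrYZ t ht i))
          (margY_assocLaw_prod_posterior_le_one hr n z)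

end SourceConverse

section Continuity

variable {α β γ : Type} [Fintype α] [Fintype β] [Fintype γ]

lemma continuous_H2 : Continuous (H2 : (α → ℝ) → ℝ) := by
  unfold H2
  simp only [logb, ← mul_div_assoc]
  exact (continuous_finsetSum _ fun a _ =>
    (continuous_mul_log.comp (continuous_apply a)).div_const _).neg

lemma continuous_MI : Continuous (MI : (α × β → ℝ) → ℝ) := by
  unfold MI
  exact ((continuous_H2.comp (by fun_prop)).add (continuous_H2.comp (by fun_prop))).sub
    continuous_H2

lemma continuous_condMI : Continuous (condMI : (α × β × γ → ℝ) → ℝ) := by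
  unfold condMI
  exact (((continuous_H2.comp (by fun_prop)).add (continuous_H2.comp (by fun_prop))).sub
    continuous_H2).sub (continuous_H2.comp (by fun_prop))

lemma continuous_compProd {T : Type*} [TopologicalSpace T] {α β : Type} {p : T → α → ℝ}
    {W : T → α → β → ℝ} (hp : Continuous p) (hW : Continuous W) :
    Continuous fun z => compProd (p z) (W z) :=
  continuous_pi fun t => ((continuous_apply t.1).comp hp).mul
    ((continuous_apply_apply t.1 t.2).comp hW)

lemma continuous_condMI_assocLaw :
    Continuous fun p : (α × β) × γ → ℝ => condMI (assocLaw p) :=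
  continuous_condMI.comp (continuous_pi fun _ => continuous_apply _)

end Continuity

section SingleLetterCondition

variable {α β ζ η υ : Type} [Fintype α] [Fintype β] [Fintype ζ] [Fintype η] [Fintype υ]

/-- The expected distortion of the test channel `K` driven by the source `q`. -/
def expDistortion (q : α × β → ℝ) (δ : α → ζ → ℝ) (K : α × β → ζ → ℝ) : ℝ :=
  ∑ t, compProd q K t * δ t.1.1 t.2

/-- The single-letter cut-set condition for one receiver that observes the output of the channel
`c` and the source component in `β`: some test channel of distortion at most `d` has conditional
rate at most `κ` times the information sent by the input law `pW`. Unlike the inequality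
`condRD q δ d ≤ κ * I`, it does not involve an infimum, so it passes to limits in `(d, pW)`. -/
def CutsetFeasible (q : α × β → ℝ) (c : η → υ → ℝ) (δ : α → ζ → ℝ) (κ d : ℝ) (pW : η → ℝ) :
    Prop :=
  ∃ K, IsCondPmf K ∧ expDistortion q δ K ≤ d ∧
    condMI (assocLaw (compProd q K)) ≤ κ * MI (compProd pW c)

lemma CutsetFeasible.mono {q : α × β → ℝ} {c : η → υ → ℝ} {δ : α → ζ → ℝ} {κ d d' : ℝ}
    {pW : η → ℝ} (h : CutsetFeasible q c δ κ d pW) (hd : d ≤ d') :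
    CutsetFeasible q c δ κ d' pW :=
  let ⟨K, hK, hKd, hKI⟩ := h
  ⟨K, hK, hKd.trans hd, hKI⟩

lemma condRD_le_condMI {q : α × β → ℝ} (hq : IsPmf q) {δ : α → ζ → ℝ} {K : α × β → ζ → ℝ}
    (hK : IsCondPmf K) {d : ℝ} (hd : expDistortion q δ K ≤ d) :
    condRD q δ d ≤ condMI (assocLaw (compProd q K)) := by
  refine csInf_le ⟨0, ?_⟩ ⟨K, hK, ?_, rfl⟩
  · rintro _ ⟨K', hK', -, rfl⟩
    exact condMI_nonneg (p := compProd q K') (hq.compProd hK').1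
  · simpa only [expDistortion, Fintype.sum_prod_type, compProd] using hd

lemma CutsetFeasible.condRD_le {q : α × β → ℝ} (hq : IsPmf q) {c : η → υ → ℝ} {δ : α → ζ → ℝ}
    {κ d : ℝ} {pW : η → ℝ} (h : CutsetFeasible q c δ κ d pW) :
    condRD q δ d ≤ κ * MI (compProd pW c) :=
  let ⟨_, hK, hKd, hKI⟩ := h
  (condRD_le_condMI hq hK hKd).trans hKI

lemma isClosed_setOf_cutsetFeasible (q : α × β → ℝ) (c : η → υ → ℝ) (δ : α → ζ → ℝ) (κ : ℝ) :
    IsClosed {x : ℝ × (η → ℝ) | CutsetFeasible q c δ κ x.1 x.2} := by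
  let S := {K : α × β → ζ → ℝ | IsCondPmf K}
  have : CompactSpace S := isCompact_iff_compactSpace.1 (isCompact_setOf_isCondPmf (α × β) ζ)
  let C := {z : S × ℝ × (η → ℝ) | expDistortion q δ z.1 ≤ z.2.1 ∧
    condMI (assocLaw (compProd q z.1.1)) ≤ κ * MI (compProd z.2.2 c)}
  have hC : IsClosed C := by
    have hK : Continuous fun z : S × ℝ × (η → ℝ) => compProd q z.1.1 :=
      continuous_compProd continuous_const (continuous_subtype_val.comp continuous_fst)
    have hW : Continuous fun z : S × ℝ × (η → ℝ) => compProd z.2.2 c :=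
      continuous_compProd (continuous_snd.comp continuous_snd) continuous_const
    have hdist : Continuous fun z : S × ℝ × (η → ℝ) => expDistortion q δ z.1.1 :=
      continuous_finsetSum _ fun t _ => ((continuous_apply t).comp hK).mul_const _
    exact (isClosed_le hdist (continuous_fst.comp continuous_snd)).inter
      (isClosed_le (continuous_condMI_assocLaw.comp hK)
        (continuous_const.mul (continuous_MI.comp hW)))
  have himage : {x : ℝ × (η → ℝ) | CutsetFeasible q c δ κ x.1 x.2} = Prod.snd '' C := by
    ext x
    constructor
    · rintro ⟨K, hK, h⟩
      exact ⟨(⟨K, hK⟩, x), h, rfl⟩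
    · rintro ⟨⟨K, x⟩, h, rfl⟩
      exact ⟨K, K.2, h⟩
  rw [himage]
  exact isClosedMap_snd_of_compactSpace _ hC

end SingleLetterCondition

section Codes

variable {α β ζ η υ υ' : Type} [Fintype α] [Fintype β] [Fintype υ]

theorem cutsetFeasible_of_code [Fintype ζ] [Fintype η] {q : α × β → ℝ} (hq : IsPmf q)
    {c : η → υ → ℝ} (hc : IsCondPmf c) (δ : α → ζ → ℝ) {n m : ℕ} [NeZero n] [NeZero m]
    (f : (Fin n → α) × (Fin n → β) → Fin m → η) (g : (Fin m → υ) × (Fin n → β) → Fin n → ζ) :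
    CutsetFeasible q c δ (m / n)
      (∑ t, compProd (iid q n) (blockChannel c f) t *
        ((n : ℝ)⁻¹ * ∑ i, δ (t.1.1 i) (g (t.2, t.1.2) i)))
      (avgLaw (iid q n) fun j s => f s j) := by
  have hf := isCondPmf_blockChannel hc f
  set p := compProd (iid q n) (blockChannel c f)
  have hp : IsPmf p := (hq.iid n).compProd hf
  have hpq : margX p = iid q n := margX_compProd _ hf
  set A : Fin n → ((Fin n → α) × (Fin n → β)) × (Fin m → υ) → (α × β) × ζ :=
    fun i t => ((t.1.1 i, t.1.2 i), g (t.2, t.1.2) i)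
  have hrX : margX (avgLaw p A) = q :=
    margX_avgLaw_of_margX_eq_iid hq hpq fun t => g (t.2, t.1.2)
  obtain ⟨K, hK, hKr⟩ := (hp.avgLaw A).exists_compProd_eq
  rw [hrX] at hKr
  have hn : (0 : ℝ) < n := Nat.cast_pos.2 (NeZero.pos n)
  refine ⟨K, hK, le_of_eq ?_, ?_⟩
  · rw [expDistortion, hKr, sum_avgLaw_mul p A fun t => δ t.1.1 t.2, Fintype.card_fin, sum_comm,
      mul_sum]
    simp only [A, mul_sum, mul_left_comm]
  · rw [hKr, div_mul_eq_mul_div, le_div_iff₀' hn]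
    calc n * condMI (assocLaw (avgLaw p A))
        ≤ condMI (assocLaw p) :=
          mul_condMI_avgLaw_le hq hp.1 hpq fun yu => g (yu.2, yu.1)
      _ ≤ MI p := hp.condMI_le_MI
      _ ≤ m * MI (compProd (avgLaw (iid q n) fun j s => f s j) c) := by
          simpa only [Fintype.card_fin] using MI_compProd_blockChannel_le (hq.iid n) hc f

lemma sum_jscP_mul [Fintype υ'] (q : α × β → ℝ) (c : η → υ × υ' → ℝ) {n m : ℕ}
    (f : (Fin n → α) × (Fin n → β) → Fin m → η)
    (Φ : (Fin n → α) → (Fin n → β) → (Fin m → υ) → ℝ) :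
    ∑ x, ∑ y, ∑ u, ∑ v, jscP q c f x y u v * Φ x y u =
      ∑ t, compProd (iid q n) (blockChannel (fun w => margX (c w)) f) t * Φ t.1.1 t.1.2 t.2 := by
  simp only [Fintype.sum_prod_type, compProd, blockChannel, margX, Fintype.prod_sum, jscP, iid,
    mul_sum, sum_mul]

end Codes

lemma JSCAchievable.exists_cutsetFeasible
    {𝒳 𝒴 Xh Yh 𝒲 𝒰 𝒱 : Type} [Fintype 𝒳] [Fintype 𝒴] [Fintype Xh] [Fintype Yh]
    [Fintype 𝒲] [Fintype 𝒰] [Fintype 𝒱] {q : 𝒳 × 𝒴 → ℝ} (hq : IsPmf q)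
    {qUV : 𝒲 → 𝒰 × 𝒱 → ℝ} (hqUV : IsCondPmf qUV) {δ1 : 𝒳 → Xh → ℝ} {δ2 : 𝒴 → Yh → ℝ}
    {κs κc d1 d2 : ℝ} (hκs : 0 < κs) (hκc : 0 < κc)
    (hach : JSCAchievable q qUV δ1 δ2 κs κc d1 d2) {ε : ℝ} (hε : 0 < ε) :
    ∃ pW, IsPmf pW ∧
      CutsetFeasible q (fun w => margX (qUV w)) δ1 (κc / κs) (d1 + ε) pW ∧
      CutsetFeasible (swap q) (fun w => margY (qUV w)) δ2 (κc / κs) (d2 + ε) pW := by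
  obtain ⟨t, n, m, f, g1, g2, ht, hn, hm, h1, h2⟩ := hach ε hε
  have ht' : (0 : ℝ) < t := Nat.cast_pos.2 ht
  have : NeZero n := ⟨Nat.cast_ne_zero.1 (hn ▸ (mul_pos hκs ht').ne')⟩
  have : NeZero m := ⟨Nat.cast_ne_zero.1 (hm ▸ (mul_pos hκc ht').ne')⟩
  have hκ : (m : ℝ) / n = κc / κs := by rw [hn, hm, mul_div_mul_right _ _ ht'.ne']
  refine ⟨avgLaw (iid q n) fun j s => f s j, (hq.iid n).avgLaw _, ?_, ?_⟩
  · rw [sum_jscP_mul q qUV f fun x y u => (n : ℝ)⁻¹ * ∑ i, δ1 (x i) (g1 (u, y) i)] at h1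
    rw [← hκ]
    exact (cutsetFeasible_of_code hq (fun w => (hqUV w).margX) δ1 f g1).mono h1
  · have hswap : ∑ y, ∑ x, ∑ v, ∑ u, jscP (swap q) (fun w => swap (qUV w)) (f ∘ Prod.swap) y x v u *
        ((n : ℝ)⁻¹ * ∑ i, δ2 (y i) (g2 (v, x) i)) ≤ d2 + ε := by
      refine le_of_eq_of_le ?_ h2
      rw [sum_comm]
      exact sum_congr rfl fun x _ => sum_congr rfl fun y _ => sum_comm
    rw [sum_jscP_mul (swap q) (fun w => swap (qUV w)) (f ∘ Prod.swap) fun y x v =>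
      (n : ℝ)⁻¹ * ∑ i, δ2 (y i) (g2 (v, x) i)] at hswap
    rw [← hκ, ← avgLaw_comp_equiv (Equiv.prodComm _ _)]
    exact (cutsetFeasible_of_code hq.swap (fun w => (hqUV w).margY) δ2 (f ∘ Prod.swap) g2).mono
      hswap

end TWR

open TWR Filter Topology in
theorem jsc_cutset_general
    {𝒳 𝒴 Xh Yh 𝒲 𝒰 𝒱 : Type}
    [Fintype 𝒳] [Fintype 𝒴] [Fintype Xh] [Fintype Yh]
    [Fintype 𝒲] [Fintype 𝒰] [Fintype 𝒱]
    (q : 𝒳 × 𝒴 → ℝ) (hq : IsPmf q)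
    (qUV : 𝒲 → 𝒰 × 𝒱 → ℝ) (hqUV : IsCondPmf qUV)
    (δ1 : 𝒳 → Xh → ℝ) (δ2 : 𝒴 → Yh → ℝ)
    (κs κc : ℝ) (hκs : 0 < κs) (hκc : 0 < κc) (d1 d2 : ℝ)
    (hach : JSCAchievable q qUV δ1 δ2 κs κc d1 d2) :
    ∃ pW : 𝒲 → ℝ, IsPmf pW ∧
      condRD q δ1 d1 ≤ (κc / κs) * chMIU qUV pW ∧
      condRD (swap q) δ2 d2 ≤ (κc / κs) * chMIV qUV pW := by
  choose pW hpW h1 h2 using fun k : ℕ =>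
    hach.exists_cutsetFeasible hq hqUV hκs hκc (Nat.one_div_pos_of_nat (n := k))
  obtain ⟨pLim, hpLim, φ, hφ, hlim⟩ := (isCompact_setOf_isPmf 𝒲).tendsto_subseq hpW
  have hlim' : ∀ d : ℝ,
      Tendsto (fun k => (d + 1 / ((φ k : ℝ) + 1), pW (φ k))) atTop (𝓝 (d, pLim)) := fun d => by
    have hε := (tendsto_one_div_add_atTop_nhds_zero_nat (𝕜 := ℝ)).comp hφ.tendsto_atTop
    simpa using (hε.const_add d).prodMk_nhds hlim
  have h1Lim := (isClosed_setOf_cutsetFeasible q _ δ1 _).mem_of_tendsto (hlim' d1)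
    (Eventually.of_forall fun k => h1 (φ k))
  have h2Lim := (isClosed_setOf_cutsetFeasible (swap q) _ δ2 _).mem_of_tendsto (hlim' d2)
    (Eventually.of_forall fun k => h2 (φ k))
  exact ⟨pLim, hpLim, h1Lim.condRD_le hq, h2Lim.condRD_le hq.swap⟩

open TWR in
/-- Theorem 6: if `(d1,d2)` is achievable with bandwidth
expansion `κ = κc/κs`, then there is a pmf `p_W` with
`R_{X|Y}(d1) ≤ κ·I(W;U)` and `R_{Y|X}(d2) ≤ κ·I(W;V)`. -/
theorem jsc_cutset
    {𝒳 𝒴 Xh Yh 𝒲 𝒰 𝒱 : Type}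
    [Fintype 𝒳] [Fintype 𝒴] [Fintype Xh] [Fintype Yh]
    [Fintype 𝒲] [Fintype 𝒰] [Fintype 𝒱]
    (q : 𝒳 × 𝒴 → ℝ) (hq : IsPmf q)
    (qUV : 𝒲 → 𝒰 × 𝒱 → ℝ) (hqUV : IsCondPmf qUV)
    (δ1 : 𝒳 → Xh → ℝ) (δ2 : 𝒴 → Yh → ℝ) (d1max d2max : ℝ)
    (hδ1 : ∀ x xh, 0 ≤ δ1 x xh ∧ δ1 x xh ≤ d1max)
    (hδ2 : ∀ y yh, 0 ≤ δ2 y yh ∧ δ2 y yh ≤ d2max)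
    (hδ1n : ∀ x, ∃ xh, δ1 x xh = 0) (hδ2n : ∀ y, ∃ yh, δ2 y yh = 0)
    (κs κc : ℝ) (hκs : 0 < κs) (hκc : 0 < κc)
    (d1 d2 : ℝ) (hd1 : 0 ≤ d1) (hd2 : 0 ≤ d2)
    (hach : JSCAchievable q qUV δ1 δ2 κs κc d1 d2) :
    ∃ pW : 𝒲 → ℝ, IsPmf pW ∧
      condRD q δ1 d1 ≤ (κc / κs) * chMIU qUV pW ∧
      condRD (swap q) δ2 d2 ≤ (κc / κs) * chMIV qUV pW :=
  jsc_cutset_general q hq qUV hqUV δ1 δ2 κs κc hκs hκc d1 d2 hach
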